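/- Let G be the quotient of Sp_4(3) = Matrix.symplecticGroup (Fin 2) (ZMod 3) by its center (so G ≅ PSp_4(3) ≅ U_4(2)). Then Γ(G) = Γ(S_5), where S_5 = Equiv.Perm (Fin 5). Explicitly: a prime divides |G| iff it divides 5!, and for all distinct primes r, s, G has an element of order r·s iff S_5 has an element of order r·s. -/

import Mathlib

/-!
The characteristic polynomial of a symplectic matrix is palindromic. If `x` is a root of a
palindromic quartic over the field with `q` elements, then `x + x⁻¹` is a root of a quadratic, so
it is fixed by the square of Frobenius, and `x ^ q ^ 2` is `x` or `x⁻¹`. A root for which only the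
second holds has degree `4`, so the quartic is irreducible and divides `X ^ (q ^ 2 + 1) - 1`. If
there is no such root, every root has order dividing `q ^ 2 - 1`, and the quartic divides
`(X ^ (q ^ 2 - 1) - 1) ^ q ^ 2 = X ^ ((q ^ 2 - 1) * q ^ 2) - 1`. For `q` odd, the order of each
element of `PSp₄(q)` therefore divides `(q ^ 2 + 1) / 2` or `(q ^ 2 - 1) * q ^ 2`, that is `5` or
`72` when `q = 3`. So in `PSp₄(3)`, as in `S₅`, every element is a `{2, 3}`-element or a
`5`-element; as both groups have elements of orders `5` and `6`, the prime graph of each is the edge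
joining `2` to `3` together with the isolated vertex `5`.
-/

open Matrix Polynomial

section Order

variable {M : Type*} [Monoid M] {p q r : ℕ}

theorem eq_or_eq_of_prime_dvd_mul {t : ℕ} (ht : t.Prime) (hp : p.Prime) (hq : q.Prime)
    (h : t ∣ p * q) : t = p ∨ t = q :=
  (ht.dvd_mul.1 h).imp (Nat.prime_dvd_prime_iff_eq ht hp).1 (Nat.prime_dvd_prime_iff_eq ht hq).1

theorem prime_dvd_of_dvd_orderOf_of_pow_pow_eq_one {t n k : ℕ} (ht : t.Prime) {x : M}
    (htx : t ∣ orderOf x) (hx : x ^ n ^ k = 1) : t ∣ n :=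
  ht.dvd_of_dvd_pow (htx.trans (orderOf_dvd_of_pow_eq_one hx))

theorem prime_divisors_orderOf_of_pow_pow_eq_one (hp : p.Prime) (hq : q.Prime) (hr : r.Prime)
    {x : M} (hx : (∃ k, x ^ (p * q) ^ k = 1) ∨ ∃ k, x ^ r ^ k = 1) :
    (∀ t : ℕ, t.Prime → t ∣ orderOf x → t = p ∨ t = q) ∨
      ∀ t : ℕ, t.Prime → t ∣ orderOf x → t = r := by
  refine hx.imp (fun ⟨k, hk⟩ t ht htx => ?_) (fun ⟨k, hk⟩ t ht htx => ?_)
  · exact eq_or_eq_of_prime_dvd_mul ht hp hq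
      (prime_dvd_of_dvd_orderOf_of_pow_pow_eq_one ht htx hk)
  · exact (Nat.prime_dvd_prime_iff_eq ht hr).1
      (prime_dvd_of_dvd_orderOf_of_pow_pow_eq_one ht htx hk)

theorem orderOf_eq_prime_mul_prime (hp : p.Prime) (hq : q.Prime) {x : M} (hpq : x ^ (p * q) = 1)
    (hxp : x ^ p ≠ 1) (hxq : x ^ q ≠ 1) : orderOf x = p * q := by
  refine orderOf_eq_of_pow_and_pow_div_prime (Nat.mul_pos hp.pos hq.pos) hpq fun t ht htpq => ?_
  rcases eq_or_eq_of_prime_dvd_mul ht hp hq htpq with rfl | rfl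
  · rwa [Nat.mul_div_cancel_left _ ht.pos]
  · rwa [Nat.mul_div_cancel _ ht.pos]

end Order

section PrimeGraph

/-- The prime graph of `G` has the vertices `p`, `q`, `r` and the single edge joining `p` to `q`.
By unique factorization, the edge `{t, u}` is encoded as the product `t * u`. -/
structure HasOneEdgePrimeGraph (G : Type*) [Group G] (p q r : ℕ) : Prop where
  dvd_card_iff : ∀ t : ℕ, t.Prime → (t ∣ Nat.card G ↔ t = p ∨ t = q ∨ t = r)
  exists_orderOf_eq_mul_iff : ∀ t u : ℕ, t.Prime → u.Prime → t ≠ u →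
    ((∃ x : G, orderOf x = t * u) ↔ t * u = p * q)

variable {G : Type*} [Group G] {p q r : ℕ}

theorem hasOneEdgePrimeGraph_of_forall_pow_eq_one [Finite G]
    (hp : p.Prime) (hq : q.Prime) (hr : r.Prime)
    (hG : ∀ x : G, (∃ k, x ^ (p * q) ^ k = 1) ∨ ∃ k, x ^ r ^ k = 1)
    (hpq : ∃ x : G, orderOf x = p * q) (hr_dvd : r ∣ Nat.card G) :
    HasOneEdgePrimeGraph G p q r where
  dvd_card_iff t ht := by
    obtain ⟨y, hy⟩ := hpq
    have hy_dvd : p * q ∣ Nat.card G := hy ▸ orderOf_dvd_natCard y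
    constructor
    · intro h
      have := Fact.mk ht
      obtain ⟨x, hx⟩ := exists_prime_orderOf_dvd_card' t h
      rcases prime_divisors_orderOf_of_pow_pow_eq_one hp hq hr (hG x) with hx' | hx'
      · exact (hx' t ht hx.symm.dvd).imp_right .inl
      · exact .inr (.inr (hx' t ht hx.symm.dvd))
    · rintro (rfl | rfl | rfl)
      · exact dvd_of_mul_right_dvd hy_dvd
      · exact dvd_of_mul_left_dvd hy_dvd
      · exact hr_dvd
  exists_orderOf_eq_mul_iff t u ht hu htu := by
    refine ⟨?_, fun h => h ▸ hpq⟩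
    rintro ⟨x, hx⟩
    have htx : t ∣ orderOf x := ⟨u, hx⟩
    have hux : u ∣ orderOf x := ⟨t, hx.trans (mul_comm t u)⟩
    rcases prime_divisors_orderOf_of_pow_pow_eq_one hp hq hr (hG x) with hx' | hx'
    · rcases hx' t ht htx with rfl | rfl <;> rcases hx' u hu hux with rfl | rfl
      · exact absurd rfl htu
      · rfl
      · exact mul_comm _ _
      · exact absurd rfl htu
    · exact absurd ((hx' t ht htx).trans (hx' u hu hux).symm) htu

theorem mk_center_ne_one {g h : G} (hgh : h * g ≠ g * h) : (g : G ⧸ Subgroup.center G) ≠ 1 := by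
  rw [Ne, QuotientGroup.eq_one_iff, Subgroup.mem_center_iff]
  exact fun hcomm => hgh (hcomm h)

end PrimeGraph

section PalindromicQuartic

theorem dvd_pow_natDegree_of_forall_irreducible_dvd {K : Type*} [Field K] {p g : K[X]}
    (hp : p ≠ 0) (hg : ∀ f, Irreducible f → f ∣ p → f ∣ g) : p ∣ g ^ p.natDegree := by
  induction p using WfDvdMonoid.induction_on_irreducible with
  | zero => exact absurd rfl hp
  | unit u hu => exact hu.dvd
  | mul a f ha hf ih =>
    rw [natDegree_mul hf.ne_zero ha, pow_add]
    exact mul_dvd_mul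
      ((hg f hf (dvd_mul_right f a)).trans (dvd_pow_self g hf.natDegree_pos.ne'))
      (ih ha fun f' hf' hdvd => hg f' hf' (hdvd.mul_left f))

theorem eq_of_reverse_eq_of_natDegree_eq_four {R : Type*} [CommRing R] {p : R[X]}
    (hmonic : p.Monic) (hdeg : p.natDegree = 4) (hrev : p.reverse = p) :
    p = X ^ 4 + C (p.coeff 3) * X ^ 3 + C (p.coeff 2) * X ^ 2 + C (p.coeff 3) * X + 1 := by
  have h4 : p.coeff 4 = 1 := hdeg ▸ hmonic.coeff_natDegree
  have hcoeff (n : ℕ) : p.coeff (revAt 4 n) = p.coeff n := by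
    rw [← hdeg, ← coeff_reverse, hrev]
  have h0 : p.coeff 0 = 1 := (hcoeff 0).symm.trans h4
  have h1 : p.coeff 1 = p.coeff 3 := (hcoeff 1).symm
  conv_lhs => rw [p.as_sum_range' 5 (by omega)]
  simp only [Finset.sum_range_succ, Finset.sum_range_zero, h0, h1, h4, ← C_mul_X_pow_eq_monomial,
    map_one]
  ring

variable {K : Type*} [Field K] [Fintype K]

section Frobenius

variable {R : Type*} [CommRing R] [Algebra K R]

theorem frobeniusAlgHom_pow_apply (n : ℕ) (z : R) :
    (FiniteField.frobeniusAlgHom K R ^ n) z = z ^ Fintype.card K ^ n := by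
  rw [AlgHom.coe_pow, FiniteField.coe_frobeniusAlgHom, pow_iterate]

theorem pow_card_sq_eq_self_of_quadratic [IsDomain R] {y : R} (a b : K)
    (hy : y ^ 2 + algebraMap K R a * y + algebraMap K R b = 0) :
    y ^ Fintype.card K ^ 2 = y := by
  let φ := FiniteField.frobeniusAlgHom K R
  have hφy : φ y ^ 2 + algebraMap K R a * φ y + algebraMap K R b = 0 := by
    simpa using congrArg φ hy
  have hroots : (φ y - y) * (φ y - (-algebraMap K R a - y)) = 0 := by
    linear_combination hφy - hy
  rw [← frobeniusAlgHom_pow_apply]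
  change φ (φ y) = y
  rcases mul_eq_zero.1 hroots with h | h
  · rw [sub_eq_zero.1 h, sub_eq_zero.1 h]
  · have hconj := sub_eq_zero.1 h
    calc φ (φ y) = -algebraMap K R a - φ y := by
          conv_lhs => rw [hconj]
          simp
      _ = y := by rw [hconj]; ring

end Frobenius

variable {L : Type*} [Field L] [Algebra K L] {p : K[X]}

theorem pow_card_sq_of_aeval_palindromic_quartic_eq_zero (hmonic : p.Monic)
    (hdeg : p.natDegree = 4) (hrev : p.reverse = p) {x : L} (hx : aeval x p = 0) :
    x ^ (Fintype.card K ^ 2 - 1) = 1 ∨ x ^ (Fintype.card K ^ 2 + 1) = 1 := by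
  let a := algebraMap K L (p.coeff 3)
  let b := algebraMap K L (p.coeff 2)
  have hquartic : x ^ 4 + a * x ^ 3 + b * x ^ 2 + a * x + 1 = 0 := by
    rw [eq_of_reverse_eq_of_natDegree_eq_four hmonic hdeg hrev] at hx
    simpa [a, b] using hx
  have hx0 : x ≠ 0 := by
    rintro rfl
    simp at hquartic
  have hquadratic : (x + x⁻¹) ^ 2 + a * (x + x⁻¹) + (b - 2) = 0 := by
    field_simp
    linear_combination hquartic
  have hfixed : x ^ Fintype.card K ^ 2 + (x ^ Fintype.card K ^ 2)⁻¹ = x + x⁻¹ := by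
    have h := pow_card_sq_eq_self_of_quadratic (p.coeff 3) (p.coeff 2 - 2)
      (y := x + x⁻¹) (by simpa only [map_sub, map_ofNat] using hquadratic)
    rw [← frobeniusAlgHom_pow_apply] at h ⊢
    simpa only [map_add, map_inv₀] using h
  set z := x ^ Fintype.card K ^ 2 with hz
  have hz0 : z ≠ 0 := pow_ne_zero _ hx0
  have hprod : (z - x) * (z * x - 1) = 0 := by
    field_simp at hfixed
    linear_combination hfixed
  refine (mul_eq_zero.1 hprod).imp (fun h => mul_right_cancel₀ hx0 ?_) fun h => ?_
  · rw [pow_sub_one_mul (by positivity), one_mul, ← hz, sub_eq_zero.1 h]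
  · rw [pow_succ, ← hz, sub_eq_zero.1 h]

theorem natDegree_eq_four_of_pow_card_sq_add_one_eq_one {f : K[X]} (hf : Irreducible f) {x : L}
    (hfx : aeval x f = 0) (hx : x ^ (Fintype.card K ^ 2 + 1) = 1)
    (hx' : x ^ (Fintype.card K ^ 2 - 1) ≠ 1) : f.natDegree = 4 := by
  have hdvd_iff (n : ℕ) : f.natDegree ∣ n ↔ x ^ Fintype.card K ^ n = x := by
    rw [hf.natDegree_dvd_iff_dvd_X_pow_card_pow_sub_X, ← hf.dvd_iff_aeval_eq_zero hfx,
      Nat.card_eq_fintype_card]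
    simp [sub_eq_zero]
  have hx0 : x ≠ 0 := by
    rintro rfl
    simp at hx
  have hsq : x ^ Fintype.card K ^ 2 = x⁻¹ := eq_inv_of_mul_eq_one_left (by rwa [← pow_succ])
  have h4 : f.natDegree ∣ 2 ^ 2 := by
    rw [hdvd_iff, show 2 ^ 2 = 2 + 2 by norm_num, pow_add, pow_mul, hsq, inv_pow, hsq, inv_inv]
  have h2 : ¬f.natDegree ∣ 2 := fun h => hx' <| mul_right_cancel₀ hx0 <| by
    rw [pow_sub_one_mul (by positivity), one_mul, (hdvd_iff 2).1 h]
  exact Nat.eq_prime_pow_of_dvd_least_prime_pow Nat.prime_two (k := 1) (by simpa using h2) h4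

theorem irreducible_and_dvd_or_dvd_of_reverse_eq (hmonic : p.Monic)
    (hdeg : p.natDegree = 4) (hrev : p.reverse = p) :
    Irreducible p ∧ p ∣ X ^ (Fintype.card K ^ 2 + 1) - 1 ∨
      p ∣ X ^ ((Fintype.card K ^ 2 - 1) * Fintype.card K ^ 2) - 1 := by
  by_cases hall : ∀ f, Irreducible f → f ∣ p → f ∣ X ^ (Fintype.card K ^ 2 - 1) - 1
  · right
    have hcard : 4 ≤ Fintype.card K ^ 2 :=
      Nat.pow_le_pow_left (Fintype.one_lt_card : 2 ≤ Fintype.card K) 2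
    calc p ∣ (X ^ (Fintype.card K ^ 2 - 1) - 1) ^ p.natDegree :=
          dvd_pow_natDegree_of_forall_irreducible_dvd hmonic.ne_zero hall
      _ ∣ (X ^ (Fintype.card K ^ 2 - 1) - 1) ^ Fintype.card K ^ 2 :=
          pow_dvd_pow _ (hdeg ▸ hcard)
      _ = X ^ ((Fintype.card K ^ 2 - 1) * Fintype.card K ^ 2) - 1 := by
          rw [pow_mul, ← frobeniusAlgHom_pow_apply, ← frobeniusAlgHom_pow_apply, map_sub, map_one]
  · left
    push Not at hall
    obtain ⟨f, hf, hfp, hfX⟩ := hall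
    have := Fact.mk hf
    let x := AdjoinRoot.root f
    have hfx : aeval x f = 0 := by simp [x]
    have hpow_iff (n : ℕ) : f ∣ X ^ n - 1 ↔ x ^ n = 1 := by
      simp [← hf.dvd_iff_aeval_eq_zero hfx, sub_eq_zero]
    rw [hpow_iff] at hfX
    have hx := (pow_card_sq_of_aeval_palindromic_quartic_eq_zero hmonic hdeg hrev
      ((hf.dvd_iff_aeval_eq_zero hfx).2 hfp)).resolve_left hfX
    have hf4 := natDegree_eq_four_of_pow_card_sq_add_one_eq_one hf hfx hx hfX
    have hassoc : Associated f p :=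
      associated_of_dvd_of_natDegree_le hfp hmonic.ne_zero (hdeg.trans hf4.symm).le
    exact ⟨hassoc.irreducible hf, hassoc.dvd_iff_dvd_left.1 ((hpow_iff _).2 hx)⟩

end PalindromicQuartic

section Symplectic

variable {l : Type*} [DecidableEq l] [Fintype l]

/-- The projective symplectic group `PSp`, of matrices of size `2 * |l|` over `R`, as the quotient
of the symplectic group by its center. -/
abbrev ProjectiveSymplecticGroup (l R : Type*) [DecidableEq l] [Fintype l] [CommRing R] :=
  symplecticGroup l R ⧸ Subgroup.center (symplecticGroup l R)

theorem reverse_charpoly_of_mem_symplecticGroup {R : Type*} [CommRing R]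
    {A : Matrix (l ⊕ l) (l ⊕ l) R} (hA : A ∈ symplecticGroup l R) :
    A.charpoly.reverse = A.charpoly := by
  have hdet := SymplecticGroup.det_eq_one hA
  have hunit : IsUnit A := (isUnit_iff_isUnit_det A).2 (hdet ▸ isUnit_one)
  have hinv : A⁻¹.charpoly = A.charpoly := by
    rw [SymplecticGroup.inv_eq_symplectic_inv A hA, Matrix.mul_assoc, charpoly_mul_comm,
      Matrix.mul_assoc, Matrix.mul_neg, J_squared, neg_neg, Matrix.mul_one, charpoly_transpose]
  calc A.charpoly.reverse = A⁻¹.charpoly := by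
        simp [charpoly_inv A hunit, hdet, reverse_charpoly, ← two_mul, pow_mul]
    _ = A.charpoly := hinv

variable {K : Type*} [Field K] [Fintype K]

theorem pow_eq_of_mem_symplecticGroup_of_card_eq_two (hl : Fintype.card l = 2)
    {A : Matrix (l ⊕ l) (l ⊕ l) K} (hA : A ∈ symplecticGroup l K) {n : ℕ}
    (hn : n * 2 = Fintype.card K ^ 2 + 1) :
    A ^ ((Fintype.card K ^ 2 - 1) * Fintype.card K ^ 2) = 1 ∨ A ^ n = 1 ∨ A ^ n = -1 := by
  have haeval {g : K[X]} (h : A.charpoly ∣ g) : aeval A g = 0 :=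
    aeval_eq_zero_of_dvd_aeval_eq_zero h (aeval_self_charpoly A)
  have hpow {m : ℕ} (h : A.charpoly ∣ X ^ m - 1) : A ^ m = 1 :=
    sub_eq_zero.1 (by simpa using haeval h)
  rcases irreducible_and_dvd_or_dvd_of_reverse_eq (charpoly_monic A)
    (by simp [charpoly_natDegree_eq_dim, hl]) (reverse_charpoly_of_mem_symplecticGroup hA)
    with ⟨hirr, hdvd⟩ | hdvd
  · have hfactor : (X ^ (Fintype.card K ^ 2 + 1) - 1 : K[X]) = (X ^ n - 1) * (X ^ n + 1) := by
      rw [← hn, pow_mul]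
      ring
    rw [hfactor, hirr.prime.dvd_mul] at hdvd
    exact .inr (hdvd.imp hpow fun h => eq_neg_of_add_eq_zero_left (by simpa using haeval h))
  · exact .inl (hpow hdvd)

theorem pow_eq_one_of_projectiveSymplecticGroup (hl : Fintype.card l = 2)
    (hK : Odd (Fintype.card K)) (x : ProjectiveSymplecticGroup l K) :
    x ^ ((Fintype.card K ^ 2 - 1) * Fintype.card K ^ 2) = 1 ∨
      x ^ ((Fintype.card K ^ 2 + 1) / 2) = 1 := by
  obtain ⟨A, rfl⟩ := QuotientGroup.mk_surjective x
  simp only [← QuotientGroup.mk_pow, QuotientGroup.eq_one_iff]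
  have hn : (Fintype.card K ^ 2 + 1) / 2 * 2 = Fintype.card K ^ 2 + 1 :=
    Nat.div_mul_cancel (hK.pow.add_odd odd_one).two_dvd
  rcases pow_eq_of_mem_symplecticGroup_of_card_eq_two hl A.2 hn with h | h | h
  · exact .inl ((Subtype.ext h : A ^ _ = 1) ▸ one_mem _)
  · exact .inr ((Subtype.ext h : A ^ _ = 1) ▸ one_mem _)
  · refine .inr (Subgroup.mem_center_iff.2 fun B => Subtype.ext ?_)
    simp [h]

theorem exists_orderOf_eq_five_projectiveSymplecticGroup :
    ∃ x : ProjectiveSymplecticGroup (Fin 2) (ZMod 3), orderOf x = 5 := by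
  let A : symplecticGroup (Fin 2) (ZMod 3) :=
    ⟨fromBlocks !![0, 0; 1, 0] !![0, -1; 0, 0] !![1, 1; 1, 0] !![0, 0; 1, -1],
      SymplecticGroup.mem_iff.2 (by decide +kernel)⟩
  have hA : A ^ 5 = 1 := Subtype.ext (by decide +kernel)
  have hJA : SymplecticGroup.symJ (Fin 2) (ZMod 3) * A ≠ A * SymplecticGroup.symJ _ _ :=
    fun h => absurd (congrArg Subtype.val h) (by decide +kernel)
  have := Fact.mk Nat.prime_five
  exact ⟨A, orderOf_eq_prime (by rw [← QuotientGroup.mk_pow, hA, QuotientGroup.mk_one])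
    (mk_center_ne_one hJA)⟩

theorem exists_orderOf_eq_six_projectiveSymplecticGroup :
    ∃ x : ProjectiveSymplecticGroup (Fin 2) (ZMod 3), orderOf x = 2 * 3 := by
  -- The natural module is an orthogonal sum of two hyperbolic planes: `A` is a transvection on the
  -- first and `-1` on the second, and `S` exchanges them.
  let A : symplecticGroup (Fin 2) (ZMod 3) :=
    ⟨fromBlocks !![1, 0; 0, -1] !![1, 0; 0, 0] 0 !![1, 0; 0, -1],
      SymplecticGroup.mem_iff.2 (by decide +kernel)⟩
  let S : symplecticGroup (Fin 2) (ZMod 3) :=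
    ⟨fromBlocks !![0, 1; 1, 0] 0 0 !![0, 1; 1, 0], SymplecticGroup.mem_iff.2 (by decide +kernel)⟩
  have hA : A ^ 6 = 1 := Subtype.ext (by decide +kernel)
  have hSA (n : ℕ) (h : S.1 * A.1 ^ n ≠ A.1 ^ n * S.1) : S * A ^ n ≠ A ^ n * S :=
    fun h' => h (congrArg Subtype.val h')
  refine ⟨A, orderOf_eq_prime_mul_prime Nat.prime_two Nat.prime_three ?_ ?_ ?_⟩
  · rw [← QuotientGroup.mk_pow, hA, QuotientGroup.mk_one]
  · exact mk_center_ne_one (hSA 2 (by decide +kernel))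
  · exact mk_center_ne_one (hSA 3 (by decide +kernel))

theorem hasOneEdgePrimeGraph_projectiveSymplecticGroup :
    HasOneEdgePrimeGraph (ProjectiveSymplecticGroup (Fin 2) (ZMod 3)) 2 3 5 := by
  refine hasOneEdgePrimeGraph_of_forall_pow_eq_one Nat.prime_two Nat.prime_three Nat.prime_five
    (fun x => ?_) exists_orderOf_eq_six_projectiveSymplecticGroup ?_
  · rcases pow_eq_one_of_projectiveSymplecticGroup (Fintype.card_fin 2) (by decide) x with h | h
    · refine .inl ⟨3, ?_⟩
      rw [ZMod.card] at h
      rw [show (2 * 3) ^ 3 = (3 ^ 2 - 1) * 3 ^ 2 * 3 by norm_num, pow_mul, h, one_pow]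
    · exact .inr ⟨1, by simpa [ZMod.card] using h⟩
  · obtain ⟨x, hx⟩ := exists_orderOf_eq_five_projectiveSymplecticGroup
    exact hx ▸ orderOf_dvd_natCard x

end Symplectic

theorem hasOneEdgePrimeGraph_perm_fin_five : HasOneEdgePrimeGraph (Equiv.Perm (Fin 5)) 2 3 5 := by
  refine hasOneEdgePrimeGraph_of_forall_pow_eq_one Nat.prime_two Nat.prime_three Nat.prime_five
    (fun y => ?_) ⟨c[0, 1, 2] * c[3, 4], ?_⟩ ?_
  · have hpow : ∀ y : Equiv.Perm (Fin 5), y ^ (2 * 3) ^ 2 = 1 ∨ y ^ 5 ^ 1 = 1 := by decide +kernel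
    exact (hpow y).imp (⟨2, ·⟩) (⟨1, ·⟩)
  · exact orderOf_eq_prime_mul_prime Nat.prime_two Nat.prime_three (by decide +kernel)
      (by decide +kernel) (by decide +kernel)
  · simp only [Nat.card_perm, Nat.card_fin]
    decide

/-- `Γ(PSp₄(3)) = Γ(S₅)` (the case `(U₄(2), O₄⁻(2))` of Corollary 1.4(b), using
`U₄(2) ≅ PSp₄(3)` and `O₄⁻(2) ≅ S₅`): the same primes divide `|PSp₄(3)|` and `5!`,
and for all distinct primes `r, s`, `PSp₄(3)` has an element of order `r * s` iff
`S₅` does. -/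
theorem prime_graph_PSp4_3_eq_S5 :
    (∀ t : ℕ, t.Prime →
      (t ∣ Nat.card (Matrix.symplecticGroup (Fin 2) (ZMod 3) ⧸
          Subgroup.center (Matrix.symplecticGroup (Fin 2) (ZMod 3))) ↔
        t ∣ Nat.factorial 5)) ∧
    (∀ r s : ℕ, r.Prime → s.Prime → r ≠ s →
      ((∃ x : Matrix.symplecticGroup (Fin 2) (ZMod 3) ⧸
          Subgroup.center (Matrix.symplecticGroup (Fin 2) (ZMod 3)), orderOf x = r * s) ↔
        (∃ y : Equiv.Perm (Fin 5), orderOf y = r * s))) := by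
  have hPSp := hasOneEdgePrimeGraph_projectiveSymplecticGroup
  have hS₅ := hasOneEdgePrimeGraph_perm_fin_five
  have hcard : Nat.card (Equiv.Perm (Fin 5)) = Nat.factorial 5 := by
    rw [Nat.card_perm, Nat.card_fin]
  refine ⟨fun t ht => ?_, fun r s hr hs hrs => ?_⟩
  · rw [← hcard, hS₅.dvd_card_iff t ht]
    exact hPSp.dvd_card_iff t ht
  · exact (hPSp.exists_orderOf_eq_mul_iff r s hr hs hrs).trans
      (hS₅.exists_orderOf_eq_mul_iff r s hr hs hrs).symm
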